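/- arXiv:1012.2071 — 2 statements merged into one kernel-verified Lean document; each statement's English description precedes it below -/
import Mathlib

section
/- Let n, m be positive integers and Θ a real n×m matrix. Then β_×(ᵗΘ) ≥ (n·β_×(Θ) + n − 1) / ((m−1)·β_×(Θ) + m), where if β_×(Θ) = +∞ the right-hand side is interpreted as n/(m−1) when m ≥ 2 and as +∞ when m = 1. -/
open MeasureTheory Filter Matrix

noncomputable section

/-- Geometric mean of the absolute values of the coordinates: Π(z). -/
def Pigeo {k : ℕ} (z : Fin k → ℝ) : ℝ := (∏ i, |z i|) ^ ((1:ℝ)/k)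

/-- Geometric mean of `max 1 |z i|`: Π'(z). -/
def Pigeo' {k : ℕ} (z : Fin k → ℝ) : ℝ := (∏ i, max 1 |z i|) ^ ((1:ℝ)/k)

/-- Coordinatewise cast of an integer vector to a real vector. -/
def ivec {k : ℕ} (x : Fin k → ℤ) : Fin k → ℝ := fun i => (x i : ℝ)

/-- The constant Δ_d = (2^{d-1}√d)⁻¹ · vol_{d-1}{x ∈ [-1,1]^d : x₁+⋯+x_d = 0}. -/
def Delta (d : ℕ) : ℝ :=
  ((2:ℝ) ^ (d - 1) * Real.sqrt d)⁻¹ *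
    (μH[(d:ℝ) - 1] {x : EuclideanSpace ℝ (Fin d) | (∀ i, |x i| ≤ 1) ∧ ∑ i, x i = 0}).toReal

/-- There are infinitely many pairs x ∈ ℤ^m \ {0}, y ∈ ℤ^n with Π(Θx − y) ≤ Π'(x)^{−γ}. -/
def MultApprox (n m : ℕ) (Θ : Matrix (Fin n) (Fin m) ℝ) (γ : ℝ) : Prop :=
  {p : (Fin m → ℤ) × (Fin n → ℤ) | p.1 ≠ 0 ∧
    Pigeo (Θ.mulVec (ivec p.1) - ivec p.2) ≤ Pigeo' (ivec p.1) ^ (-γ)}.Infinite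

/-- The multiplicative Diophantine exponent β_×(Θ), as an extended real number. -/
def mbeta (n m : ℕ) (Θ : Matrix (Fin n) (Fin m) ℝ) : EReal :=
  sSup {x : EReal | ∃ γ : ℝ, x = (γ : EReal) ∧ MultApprox n m Θ γ}

/-- Minkowski's theorem on linear forms. -/
theorem exists_int_vec_abs_mulVec_le {ι : Type*} [Fintype ι] [DecidableEq ι] [Nonempty ι]
    (A : Matrix ι ι ℝ) (hA : A.det ≠ 0) (C : ι → ℝ) (hC : ∀ i, 0 < C i)
    (h : |A.det| ≤ ∏ i, C i) :
    ∃ z : ι → ℤ, z ≠ 0 ∧ ∀ i, |(A *ᵥ fun j => (z j : ℝ)) i| ≤ C i := by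
  have hli : LinearIndependent ℝ (Aᵀ).row := by
    rw [linearIndependent_rows_iff_isUnit, Matrix.isUnit_iff_isUnit_det, det_transpose]
    exact hA.isUnit
  let b : Module.Basis ι ℝ (ι → ℝ) :=
    basisOfLinearIndependentOfCardEqFinrank hli (by simp)
  have hb : (b : ι → ι → ℝ) = (Aᵀ).row := coe_basisOfLinearIndependentOfCardEqFinrank hli _
  let L := (Submodule.span ℤ (Set.range b)).toAddSubgroup
  have : Countable L := inferInstanceAs (Countable (Submodule.span ℤ (Set.range b)))
  have : DiscreteTopology L :=
    inferInstanceAs (DiscreteTopology (Submodule.span ℤ (Set.range b)))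
  have fund : IsAddFundamentalDomain L (ZSpan.fundamentalDomain b) volume :=
    ZSpan.isAddFundamentalDomain b volume
  have hvol : volume (ZSpan.fundamentalDomain b) * 2 ^ Module.finrank ℝ (ι → ℝ) ≤
      volume (Set.Icc (fun i => -C i) C) := by
    have hof : (Matrix.of (b : ι → ι → ℝ)).det = A.det := by
      rw [hb, ← det_transpose A]
      rfl
    rw [ZSpan.volume_fundamentalDomain, hof, Real.volume_Icc_pi,
      ← ENNReal.ofReal_prod_of_nonneg (fun i _ => by linarith [hC i])]
    have h2 : (2 : ENNReal) ^ Module.finrank ℝ (ι → ℝ) = ENNReal.ofReal (2 ^ Fintype.card ι) := by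
      simp [ENNReal.ofReal_pow]
    rw [h2, ← ENNReal.ofReal_mul (abs_nonneg _)]
    apply ENNReal.ofReal_le_ofReal
    have : ∏ i, (C i - -C i) = (∏ i, C i) * 2 ^ Fintype.card ι := by
      simp_rw [sub_neg_eq_add, ← mul_two]
      rw [Finset.prod_mul_distrib]
      simp
    rw [this]
    gcongr
  obtain ⟨⟨x, hxL⟩, hx0, hx⟩ := exists_ne_zero_mem_lattice_of_measure_mul_two_pow_le_measure
    (L := L) fund (s := Set.Icc (fun i => -C i) C)
    (fun x hx => ⟨fun i => by simpa using hx.2 i, fun i => by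
      have := hx.1 i
      simp only [Pi.neg_apply]
      linarith⟩)
    (convex_Icc _ _) isCompact_Icc hvol
  obtain ⟨z, hz⟩ := (Submodule.mem_span_range_iff_exists_fun ℤ).1
    (show x ∈ Submodule.span ℤ (Set.range b) from hxL)
  have hxz : A *ᵥ (fun j => (z j : ℝ)) = x := by
    rw [← hz, hb]
    ext i
    simp [mulVec, dotProduct, Matrix.row, mul_comm]
  refine ⟨z, ?_, fun i => ?_⟩
  · rintro rfl
    apply hx0
    ext1
    change x = 0
    rw [← hxz]
    ext i
    simp [mulVec]
  · rw [hxz, abs_le]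
    exact ⟨hx.1 i, hx.2 i⟩

/-- Minkowski's theorem in the orthogonal complement of a vector whose product with
a unimodular matrix is integral. -/
theorem exists_int_vec_dotProduct_mulVec_eq_zero {ι : Type*} [Fintype ι] [DecidableEq ι]
    (A : Matrix ι ι ℝ) (hA : |A.det| = 1) (c : ι → ℝ) (p : ι → ℤ)
    (hp : c ᵥ* A = fun j => (p j : ℝ)) (k : ι) (hk : c k ≠ 0) (C : ι → ℝ) (hC : ∀ i, 0 < C i)
    (h : 2 * (C k * |c k|) ≤ ∏ i, C i) :
    ∃ z : ι → ℤ, z ≠ 0 ∧ c ⬝ᵥ (A *ᵥ fun j => (z j : ℝ)) = 0 ∧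
      ∀ i, i ≠ k → |(A *ᵥ fun j => (z j : ℝ)) i| ≤ C i := by
  have : Nonempty ι := ⟨k⟩
  have hrow : ∑ i, c i • A i = fun j => (p j : ℝ) := by
    rw [← hp]
    ext j
    simp [vecMul, dotProduct]
  have hdet : (A.updateRow k (fun j => (p j : ℝ))).det = c k * A.det := by
    rw [← hrow, det_updateRow_sum, smul_eq_mul]
  have hA0 : A.det ≠ 0 := by
    intro h0
    simp [h0] at hA
  obtain ⟨z, hz0, hz⟩ := exists_int_vec_abs_mulVec_le (A.updateRow k (fun j => (p j : ℝ)))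
    (by rw [hdet]; exact mul_ne_zero hk hA0) (Function.update C k (1 / 2))
    (fun i => by
      rcases eq_or_ne i k with rfl | hi
      · simp
      · simpa [hi] using hC i)
    (by
      rw [hdet, abs_mul, hA, mul_one, Finset.prod_update_of_mem (Finset.mem_univ k)]
      rw [← Finset.mul_prod_erase _ _ (Finset.mem_univ k), ← Finset.sdiff_singleton_eq_erase] at h
      have := le_of_mul_le_mul_left (h.trans_eq' (mul_left_comm _ _ _)) (hC k)
      linarith)
  refine ⟨z, hz0, ?_, fun i hi => ?_⟩
  · have h1 := hz k
    have h2 : (A.updateRow k (fun j => (p j : ℝ)) *ᵥ fun j => (z j : ℝ)) k =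
        ((∑ j, p j * z j : ℤ) : ℝ) := by
      simp [mulVec, dotProduct]
    have h3 : ∑ j, p j * z j = 0 := by
      rw [h2, Function.update_self] at h1
      have : |∑ j, p j * z j| < 1 := by
        have h4 : (|∑ j, p j * z j| : ℝ) < 1 := by push_cast at h1; linarith
        exact_mod_cast h4
      exact Int.abs_lt_one_iff.1 this
    rw [dotProduct_mulVec, hp]
    simp only [dotProduct]
    exact_mod_cast h3
  · have := hz i
    rw [Function.update_of_ne hi] at this
    simpa [mulVec, updateRow_ne hi] using this

/-- Mahler-type transference: a point of the lattice of pairs `(x, Θ x - y)` yields a point of the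
dual lattice in a box determined by the coordinates of the given point. -/
theorem exists_dual_point {n m : ℕ} (Θ : Matrix (Fin n) (Fin m) ℝ) (x : Fin m → ℤ) (hx : x ≠ 0)
    (y : Fin n → ℤ) (μ : Fin n → ℝ) (hμ : ∀ i, 0 < μ i)
    (hz : ∀ i, |(Θ *ᵥ ivec x - ivec y) i| ≤ μ i) (r : ℝ) (hr : 0 < r)
    (h : r ^ m * ∏ i, max 1 (r / μ i) = 2 ^ (n + 1) * (∏ j, max 1 |ivec x j|) * r) :
    ∃ (v : Fin n → ℤ) (u : Fin m → ℤ), (v ≠ 0 ∨ u ≠ 0) ∧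
      (∀ j, |(Θᵀ *ᵥ ivec v - ivec u) j| ≤ (m + n) * r / max 1 |ivec x j|) ∧
      ∀ i, max 1 |ivec v i| ≤ max 1 (r / μ i) := by
  obtain ⟨k, hk⟩ := Function.ne_iff.1 hx
  have hk' : x k ≠ 0 := hk
  have hxk : (1 : ℝ) ≤ |ivec x k| := by
    have := Int.one_le_abs hk'
    simp only [ivec]
    exact_mod_cast this
  have hl : ∀ j, 0 < max 1 |ivec x j| := fun j => lt_max_of_lt_left one_pos
  have hb : ∀ i, 0 < max 1 (r / μ i) := fun j => lt_max_of_lt_left one_pos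
  set A : Matrix (Fin m ⊕ Fin n) (Fin m ⊕ Fin n) ℝ := fromBlocks (-1) Θᵀ 0 1 with hAdef
  have hA : |A.det| = 1 := by
    rw [hAdef, det_fromBlocks_zero₂₁, det_neg]
    simp
  set c : Fin m ⊕ Fin n → ℝ := Sum.elim (-ivec x) (Θ *ᵥ ivec x - ivec y) with hc
  have hp : c ᵥ* A = fun j => ((Sum.elim x (-y) j : ℤ) : ℝ) := by
    rw [hAdef, hc, vecMul_fromBlocks]
    ext j
    rcases j with j | i
    · simp [ivec, vecMul_neg]
    · have hvm : -ivec x ᵥ* Θᵀ = -(Θ *ᵥ ivec x) := by rw [neg_vecMul, vecMul_transpose]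
      simp only [ivec, Sum.elim_inr, Sum.elim_comp_inl, Sum.elim_comp_inr, Pi.add_apply, hvm,
        vecMul_one, Pi.sub_apply, Pi.neg_apply, Int.cast_neg]
      ring
  obtain ⟨w, hw0, hdot, hwC⟩ := exists_int_vec_dotProduct_mulVec_eq_zero A hA c _ hp (Sum.inl k)
    (by simpa [hc, ivec] using hk') (Sum.elim (fun j => r / max 1 |ivec x j|)
      (fun i => 1 / 2 * max 1 (r / μ i)))
    (by
      rintro (j | i)
      · exact div_pos hr (hl j)
      · exact mul_pos one_half_pos (hb i))
    (by
      simp only [Fintype.prod_sum_type, Sum.elim_inl, Sum.elim_inr, Finset.prod_div_distrib,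
        Finset.prod_mul_distrib, Finset.prod_const, Finset.card_univ, Fintype.card_fin]
      have hQ : 0 < ∏ j, max 1 |ivec x j| := Finset.prod_pos fun j _ => hl j
      have hck : |c (Sum.inl k)| = |ivec x k| := by simp [hc]
      rw [div_mul_eq_mul_div (r ^ m), mul_left_comm (r ^ m), h, hck, max_eq_right hxk, one_pow, pow_succ]
      apply le_of_eq
      field_simp)
  set v : Fin n → ℤ := fun i => w (Sum.inr i) with hv
  set u : Fin m → ℤ := fun j => w (Sum.inl j) with hu
  have hAw : (A *ᵥ fun j => (w j : ℝ)) = Sum.elim (Θᵀ *ᵥ ivec v - ivec u) (ivec v) := by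
    rw [hAdef, fromBlocks_mulVec]
    ext j
    rcases j with j | i
    · simp only [Sum.elim_inl, neg_mulVec, one_mulVec]
      rw [neg_add_eq_sub]
      rfl
    · simp only [Sum.elim_inr, zero_mulVec, one_mulVec, zero_add]
      rfl
  rw [hAw] at hdot hwC
  have hvC : ∀ i, |ivec v i| ≤ 1 / 2 * max 1 (r / μ i) := fun i => by
    simpa using hwC (Sum.inr i) (by simp)
  have huC : ∀ j, j ≠ k → |(Θᵀ *ᵥ ivec v - ivec u) j| ≤ r / max 1 |ivec x j| := fun j hj => by
    simpa using hwC (Sum.inl j) (by simpa using hj)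
  have hvr : ∀ i, |(Θ *ᵥ ivec x - ivec y) i * ivec v i| ≤ r := by
    intro i
    rw [abs_mul]
    rcases le_total (r / μ i) 1 with h1 | h1
    · have h2 := hvC i
      rw [max_eq_left h1] at h2
      have h3 : v i = 0 := by
        have : (|(v i : ℝ)|) < 1 := by simp only [ivec] at h2; linarith
        exact Int.abs_lt_one_iff.1 (by exact_mod_cast this)
      simp [ivec, h3, hr.le]
    · have h2 := hvC i
      rw [max_eq_right h1] at h2
      calc _ ≤ μ i * (r / μ i) := by
            apply mul_le_mul (hz i) _ (abs_nonneg _) (hμ i).le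
            linarith
        _ = r := by field_simp [(hμ i).ne']
  have hur : ∀ j, j ≠ k → |ivec x j * (Θᵀ *ᵥ ivec v - ivec u) j| ≤ r := by
    intro j hj
    rw [abs_mul]
    calc _ ≤ max 1 |ivec x j| * (r / max 1 |ivec x j|) :=
          mul_le_mul (le_max_right _ _) (huC j hj) (abs_nonneg _) (hl j).le
      _ = r := mul_div_cancel₀ _ (hl j).ne'
  have hD : r ≤ (m + n) * r := by
    have : (1 : ℝ) ≤ m := by exact_mod_cast Fin.pos k
    have : (0 : ℝ) ≤ n := n.cast_nonneg
    nlinarith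
  refine ⟨v, u, ?_, fun j => ?_, fun i => max_le (le_max_left _ _) ?_⟩
  · by_contra! hcon
    apply hw0
    ext j
    rcases j with j | i
    · exact congrFun hcon.2 j
    · exact congrFun hcon.1 i
  · rcases eq_or_ne j k with rfl | hj
    · rw [max_eq_right hxk, le_div_iff₀ (by linarith), ← abs_mul, mul_comm]
      have h1 : ivec x j * (Θᵀ *ᵥ ivec v - ivec u) j =
          (∑ i, (Θ *ᵥ ivec x - ivec y) i * ivec v i) -
            ∑ l ∈ Finset.univ.erase j, ivec x l * (Θᵀ *ᵥ ivec v - ivec u) l := by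
        have h2 := hdot
        simp only [dotProduct, hc, Fintype.sum_sum_type, Sum.elim_inl, Sum.elim_inr,
          Pi.neg_apply, neg_mul, Finset.sum_neg_distrib] at h2
        rw [← Finset.add_sum_erase _ _ (Finset.mem_univ j)] at h2
        linarith
      rw [h1]
      calc _ ≤ |∑ i, (Θ *ᵥ ivec x - ivec y) i * ivec v i| +
            |∑ l ∈ Finset.univ.erase j, ivec x l * (Θᵀ *ᵥ ivec v - ivec u) l| := abs_sub _ _
        _ ≤ (∑ i : Fin n, r) + ∑ l ∈ Finset.univ.erase j, r := by
            gcongr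
            · exact (Finset.abs_sum_le_sum_abs _ _).trans (Finset.sum_le_sum fun i _ => hvr i)
            · exact (Finset.abs_sum_le_sum_abs _ _).trans
                (Finset.sum_le_sum fun l hl => hur l (Finset.ne_of_mem_erase hl))
        _ ≤ (∑ i : Fin n, r) + ∑ l : Fin m, r := by
            gcongr
            exact Finset.erase_subset _ _
        _ = (m + n) * r := by
            simp
            ring
    · exact (huC j hj).trans (by gcongr)
  · have := hvC i
    have := hb i
    linarith

theorem exists_scale {n m : ℕ} (hn : 0 < n) (μ : Fin n → ℝ) (hμ : ∀ i, 0 < μ i)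
    (K : ℝ) (hK : 1 < K) :
    ∃ r : ℝ, 0 < r ∧ r ^ (m - 1) * ∏ i, max 1 (r / μ i) = K := by
  have hM : 0 < ∏ i, μ i := Finset.prod_pos fun i _ => hμ i
  set g : ℝ → ℝ := fun r => r ^ (m - 1) * ∏ i, max 1 (r / μ i) with hg
  have hcont : Continuous g := by fun_prop
  have h0 : g 0 ≤ 1 := by
    simp only [hg, zero_div]
    rw [Finset.prod_eq_one (fun i _ => max_eq_left zero_le_one), mul_one]
    exact pow_le_one₀ le_rfl zero_le_one
  set R := max 1 (K * ∏ i, μ i)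
  have hR1 : 1 ≤ R := le_max_left _ _
  have hR : K ≤ g R := by
    have h1 : R / ∏ i, μ i ≤ ∏ i, max 1 (R / μ i) := by
      calc R / ∏ i, μ i ≤ R ^ n / ∏ i, μ i := by
            gcongr
            exact le_self_pow₀ hR1 hn.ne'
        _ = ∏ i, R / μ i := by simp [Finset.prod_div_distrib]
        _ ≤ _ := Finset.prod_le_prod (fun i _ => div_nonneg (by linarith) (hμ i).le)
            (fun i _ => le_max_right _ _)
    have h2 : K ≤ R / ∏ i, μ i := by
      rw [le_div_iff₀ hM]
      exact le_max_right _ _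
    calc K ≤ ∏ i, max 1 (R / μ i) := h2.trans h1
      _ ≤ R ^ (m - 1) * ∏ i, max 1 (R / μ i) :=
        le_mul_of_one_le_left (by positivity) (one_le_pow₀ hR1)
  obtain ⟨r, hr, hgr⟩ := intermediate_value_Icc (zero_le_one.trans hR1) hcont.continuousOn
    (show K ∈ Set.Icc (g 0) (g R) from ⟨by linarith, hR⟩)
  refine ⟨r, lt_of_le_of_ne hr.1 ?_, hgr⟩
  rintro rfl
  linarith

theorem ivec_smul {k : ℕ} (c : ℤ) (x : Fin k → ℤ) : ivec (c • x) = (c : ℝ) • ivec x := by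
  ext i
  simp [ivec]

theorem Pigeo_nonneg {k : ℕ} (z : Fin k → ℝ) : 0 ≤ Pigeo z :=
  Real.rpow_nonneg (Finset.prod_nonneg fun _ _ => abs_nonneg _) _

theorem one_le_prod_of_forall_one_le {ι : Type*} {s : Finset ι} {f : ι → ℝ}
    (h : ∀ i ∈ s, 1 ≤ f i) : 1 ≤ ∏ i ∈ s, f i :=
  Finset.prod_induction f (fun t => 1 ≤ t) (fun _ _ => one_le_mul_of_one_le_of_one_le) le_rfl h

theorem one_le_prod_max {k : ℕ} (z : Fin k → ℝ) : 1 ≤ ∏ i, max 1 |z i| :=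
  one_le_prod_of_forall_one_le fun _ _ => le_max_left _ _

theorem le_prod_max {k : ℕ} (z : Fin k → ℝ) (i : Fin k) : |z i| ≤ ∏ i, max 1 |z i| := by
  rw [← Finset.mul_prod_erase _ _ (Finset.mem_univ i)]
  refine (le_max_right 1 _).trans (le_mul_of_one_le_right ?_ ?_)
  · exact zero_le_one.trans (le_max_left _ _)
  · exact one_le_prod_of_forall_one_le fun _ _ => le_max_left _ _

theorem one_le_Pigeo' {k : ℕ} (z : Fin k → ℝ) : 1 ≤ Pigeo' z :=
  Real.one_le_rpow (one_le_prod_max z) (by positivity)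

theorem Pigeo_eq_zero {k : ℕ} {z : Fin k → ℝ} {i : Fin k} (h : z i = 0) : Pigeo z = 0 := by
  rw [Pigeo, Finset.prod_eq_zero (Finset.mem_univ i) (by simp [h]), Real.zero_rpow]
  have := Fin.pos i
  positivity

theorem exists_eq_zero_of_Pigeo_eq_zero {k : ℕ} {z : Fin k → ℝ} (h : Pigeo z = 0) :
    ∃ i, z i = 0 := by
  rw [Pigeo, Real.rpow_eq_zero_iff_of_nonneg (Finset.prod_nonneg fun _ _ => abs_nonneg _)] at h
  obtain ⟨i, -, hi⟩ := Finset.prod_eq_zero_iff.1 h.1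
  exact ⟨i, abs_eq_zero.1 hi⟩

theorem mulVec_ivec_smul_sub {n m : ℕ} (Θ : Matrix (Fin n) (Fin m) ℝ) (c : ℤ)
    (x : Fin m → ℤ) (y : Fin n → ℤ) :
    Θ *ᵥ ivec (c • x) - ivec (c • y) = (c : ℝ) • (Θ *ᵥ ivec x - ivec y) := by
  rw [ivec_smul, ivec_smul, mulVec_smul, smul_sub]

/-- Arbitrarily small approximations force infinitely many of them. -/
theorem MultApprox.of_forall_lt {n m : ℕ} (Θ : Matrix (Fin n) (Fin m) ℝ) (γ : ℝ)
    (h : ∀ ε : ℝ, 0 < ε → ∃ (x : Fin m → ℤ) (y : Fin n → ℤ), x ≠ 0 ∧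
      Pigeo (Θ *ᵥ ivec x - ivec y) ≤ Pigeo' (ivec x) ^ (-γ) ∧
      Pigeo (Θ *ᵥ ivec x - ivec y) < ε) :
    MultApprox n m Θ γ := by
  by_contra hfin
  rw [MultApprox, Set.not_infinite] at hfin
  set S := {p : (Fin m → ℤ) × (Fin n → ℤ) | p.1 ≠ 0 ∧
    Pigeo (Θ.mulVec (ivec p.1) - ivec p.2) ≤ Pigeo' (ivec p.1) ^ (-γ)}
  have hpos : ∀ p ∈ S, 0 < Pigeo (Θ.mulVec (ivec p.1) - ivec p.2) := by
    intro p hp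
    refine lt_of_le_of_ne (Pigeo_nonneg _) fun h0 => ?_
    obtain ⟨i, hi⟩ := exists_eq_zero_of_Pigeo_eq_zero h0.symm
    have hinj : Function.Injective fun k : ℕ => (((k : ℤ) + 1) • p.1, ((k : ℤ) + 1) • p.2) := by
      obtain ⟨j, hj⟩ := Function.ne_iff.1 hp.1
      intro a b hab
      have := congrFun (congrArg Prod.fst hab) j
      simp only [Pi.smul_apply, smul_eq_mul] at this
      have := mul_right_cancel₀ hj this
      omega
    refine Set.infinite_range_of_injective hinj (hfin.subset ?_)
    rintro _ ⟨k, rfl⟩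
    refine ⟨smul_ne_zero (by omega) hp.1, ?_⟩
    simp only
    rw [mulVec_ivec_smul_sub, Pigeo_eq_zero (i := i) (by simp [hi])]
    exact Real.rpow_nonneg (zero_le_one.trans (one_le_Pigeo' _)) _
  obtain ⟨x, y, hx, hxy, -⟩ := h 1 one_pos
  obtain ⟨p, hp, hmin⟩ := Set.exists_min_image S
    (fun p => Pigeo (Θ.mulVec (ivec p.1) - ivec p.2)) hfin ⟨(x, y), hx, hxy⟩
  obtain ⟨x', y', hx', hxy', hlt⟩ := h _ (hpos p hp)
  exact (hmin (x', y') ⟨hx', hxy'⟩).not_gt hlt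

/-- Infinitely many approximations include ones of arbitrarily large height. -/
theorem MultApprox.exists_large {n m : ℕ} {Θ : Matrix (Fin n) (Fin m) ℝ} {γ : ℝ}
    (h : MultApprox n m Θ γ) (hγ : 0 ≤ γ) (M : ℝ) :
    ∃ (x : Fin m → ℤ) (y : Fin n → ℤ), x ≠ 0 ∧
      Pigeo (Θ *ᵥ ivec x - ivec y) ≤ Pigeo' (ivec x) ^ (-γ) ∧
      M ≤ ∏ j, max 1 |ivec x j| := by
  by_cases hzero : ∃ (x : Fin m → ℤ) (y : Fin n → ℤ) (i : Fin n), x ≠ 0 ∧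
      (Θ *ᵥ ivec x - ivec y) i = 0
  · obtain ⟨x, y, i, hx, hi⟩ := hzero
    obtain ⟨k, hk⟩ := exists_nat_ge M
    refine ⟨((k : ℤ) + 1) • x, ((k : ℤ) + 1) • y, smul_ne_zero (by omega) hx, ?_, ?_⟩
    · rw [mulVec_ivec_smul_sub, Pigeo_eq_zero (i := i) (by simp [hi])]
      exact Real.rpow_nonneg (zero_le_one.trans (one_le_Pigeo' _)) _
    · obtain ⟨j, hj⟩ := Function.ne_iff.1 hx
      refine le_trans ?_ (le_prod_max _ j)
      have h1 : (1 : ℝ) ≤ |(x j : ℝ)| := by exact_mod_cast Int.one_le_abs hj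
      have h2 : (0 : ℝ) ≤ k := k.cast_nonneg
      simp only [Pi.smul_apply, smul_eq_mul, ivec]
      push_cast
      rw [abs_mul, abs_of_pos (by linarith : (0 : ℝ) < k + 1)]
      nlinarith
  · push Not at hzero
    by_contra! hcon
    refine h (Set.Finite.subset (s := ⋃ x ∈ Set.Icc (fun _ : Fin m => -⌈M⌉) (fun _ => ⌈M⌉),
      {p : (Fin m → ℤ) × (Fin n → ℤ) | p.1 = x ∧ x ≠ 0 ∧
        Pigeo (Θ.mulVec (ivec x) - ivec p.2) ≤ 1}) ?_ ?_)
    · refine Set.Finite.biUnion (Set.finite_Icc _ _) fun x _ => ?_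
      by_cases hx : x = 0
      · simp [hx]
      set t := Θ.mulVec (ivec x) with ht
      set e : Fin n → ℝ := fun i => |t i - round (t i)| with he
      have hepos : ∀ i, 0 < e i := fun i =>
        abs_pos.2 (hzero x (fun i => round (t i)) i hx)
      set B : Fin n → ℝ := fun i => e i * (∏ l, e l)⁻¹
      refine Set.Finite.subset ((Set.finite_singleton x).prod
        (Set.finite_Icc (fun i => ⌊t i - B i⌋) (fun i => ⌈t i + B i⌉))) ?_
      rintro ⟨x', y⟩ ⟨hx', -, hy⟩
      refine ⟨hx', ?_⟩
      have hprod : ∏ i, |(t - ivec y) i| ≤ 1 := by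
        rcases Nat.eq_zero_or_pos n with rfl | hn
        · simp
        by_contra! hgt
        exact (Real.one_lt_rpow hgt (by positivity : (0 : ℝ) < 1 / n)).not_ge hy
      have hge : ∀ i, 1 ≤ |(t - ivec y) i| / e i := fun i => by
        rw [le_div_iff₀ (hepos i), one_mul]
        exact round_le _ _
      have hle : ∀ i, |t i - y i| ≤ B i := by
        intro i
        have h1 : |(t - ivec y) i| / e i ≤ ∏ l, |(t - ivec y) l| / e l := by
          rw [← Finset.mul_prod_erase _ _ (Finset.mem_univ i)]
          exact le_mul_of_one_le_right (zero_le_one.trans (hge i))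
            (one_le_prod_of_forall_one_le fun l _ => hge l)
        rw [Finset.prod_div_distrib, div_le_iff₀ (hepos i)] at h1
        have hE : 0 < ∏ l, e l := Finset.prod_pos fun i _ => hepos i
        calc |t i - y i| ≤ _ := h1
          _ ≤ 1 / (∏ l, e l) * e i := by
            have := hepos i
            gcongr
          _ = B i := by rw [one_div, mul_comm]
      refine ⟨fun i => ?_, fun i => ?_⟩
      · have := (abs_le.1 (hle i)).2
        exact Int.floor_le_iff.2 (by linarith)
      · have := (abs_le.1 (hle i)).1
        exact Int.le_ceil_iff.2 (by linarith)
    · rintro ⟨x, y⟩ ⟨hx, hxy⟩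
      have hM := hcon x y hx hxy
      simp only [Set.mem_iUnion]
      refine ⟨x, ?_, rfl, hx, hxy.trans
        (Real.rpow_le_one_of_one_le_of_nonpos (one_le_Pigeo' _) (by linarith))⟩
      have hxj : ∀ j, |x j| ≤ ⌈M⌉ := fun j => by
        have h1 : (|(x j : ℝ)|) ≤ ⌈M⌉ := ((le_prod_max (ivec x) j).trans hM.le).trans (Int.le_ceil M)
        exact_mod_cast h1
      exact ⟨fun j => (abs_le.1 (hxj j)).1, fun j => (abs_le.1 (hxj j)).2⟩

theorem Pigeo_le {k : ℕ} (hk : 0 < k) {z : Fin k → ℝ} {b : ℝ} (hb : 0 ≤ b)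
    (h : ∏ i, |z i| ≤ b ^ k) : Pigeo z ≤ b := by
  calc Pigeo z ≤ (b ^ k) ^ ((1 : ℝ) / k) :=
        Real.rpow_le_rpow (Finset.prod_nonneg fun _ _ => abs_nonneg _) h (by positivity)
    _ = b := by rw [one_div, Real.pow_rpow_inv_natCast hb hk.ne']

theorem Pigeo'_le {k : ℕ} (hk : 0 < k) {z : Fin k → ℝ} {b : ℝ} (hb : 0 ≤ b)
    (h : ∏ i, max 1 |z i| ≤ b ^ k) : Pigeo' z ≤ b := by
  calc Pigeo' z ≤ (b ^ k) ^ ((1 : ℝ) / k) :=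
        Real.rpow_le_rpow (zero_le_one.trans (one_le_prod_max z)) h (by positivity)
    _ = b := by rw [one_div, Real.pow_rpow_inv_natCast hb hk.ne']

/-- Dirichlet's theorem: the multiplicative exponent is at least `m / n`. -/
theorem MultApprox.dirichlet {n m : ℕ} (hn : 0 < n) (hm : 0 < m)
    (Θ : Matrix (Fin n) (Fin m) ℝ) : MultApprox n m Θ ((m : ℝ) / n) := by
  refine MultApprox.of_forall_lt Θ _ fun ε hε => ?_
  set T : ℝ := max 2 (2 / ε)
  have hT2 : 2 ≤ T := le_max_left _ _
  have hT0 : 0 < T := by linarith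
  have hTε : (T ^ m)⁻¹ < ε := by
    have h1 : 2 / ε ≤ T ^ m := (le_max_right _ _).trans (le_self_pow₀ (by linarith) hm.ne')
    rw [div_le_iff₀ hε] at h1
    rw [inv_lt_iff_one_lt_mul₀ (by positivity)]
    linarith
  have hT1 : (T ^ m)⁻¹ < 1 := inv_lt_one_of_one_lt₀ (one_lt_pow₀ (by linarith) hm.ne')
  set A : Matrix (Fin n ⊕ Fin m) (Fin n ⊕ Fin m) ℝ := fromBlocks (-1) Θ 0 1 with hAdef
  have hA : |A.det| = 1 := by
    rw [hAdef, det_fromBlocks_zero₂₁, det_neg]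
    simp
  have : Nonempty (Fin n ⊕ Fin m) := ⟨Sum.inl ⟨0, hn⟩⟩
  obtain ⟨w, hw0, hwC⟩ := exists_int_vec_abs_mulVec_le A
    (fun h0 => by simp [h0] at hA)
    (Sum.elim (fun _ => (T ^ m)⁻¹) (fun _ => T ^ n))
    (by
      rintro (j | i)
      · exact inv_pos.2 (pow_pos hT0 _)
      · exact pow_pos hT0 _)
    (by
      rw [hA]
      simp only [Fintype.prod_sum_type, Sum.elim_inl, Sum.elim_inr, Finset.prod_const,
        Finset.card_univ, Fintype.card_fin]
      rw [inv_pow, ← pow_mul, ← pow_mul, mul_comm n m, inv_mul_cancel₀ (by positivity)])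
  set x : Fin m → ℤ := fun i => w (Sum.inr i) with hx
  set y : Fin n → ℤ := fun j => w (Sum.inl j) with hy
  have hAw : (A *ᵥ fun j => (w j : ℝ)) = Sum.elim (Θ *ᵥ ivec x - ivec y) (ivec x) := by
    rw [hAdef, fromBlocks_mulVec]
    ext j
    rcases j with j | i
    · simp only [Sum.elim_inl, neg_mulVec, one_mulVec]
      rw [neg_add_eq_sub]
      rfl
    · simp only [Sum.elim_inr, zero_mulVec, one_mulVec, zero_add]
      rfl
  rw [hAw] at hwC
  have hxC : ∀ j, |ivec x j| ≤ T ^ n := fun j => hwC (Sum.inr j)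
  have hyC : ∀ i, |(Θ *ᵥ ivec x - ivec y) i| ≤ (T ^ m)⁻¹ := fun i => hwC (Sum.inl i)
  have hPi : Pigeo (Θ *ᵥ ivec x - ivec y) ≤ (T ^ m)⁻¹ := by
    refine Pigeo_le hn (by positivity) ((Finset.prod_le_prod (fun _ _ => abs_nonneg _)
      fun i _ => hyC i).trans_eq (by simp))
  have hPi' : Pigeo' (ivec x) ≤ T ^ n := by
    refine Pigeo'_le hm (by positivity) ((Finset.prod_le_prod
      (fun _ _ => zero_le_one.trans (le_max_left _ _))
      fun i _ => max_le (one_le_pow₀ (by linarith)) (hxC i)).trans_eq (by simp))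
  refine ⟨x, y, fun hx0 => hw0 ?_, ?_, hPi.trans_lt hTε⟩
  · ext j
    rcases j with i | j
    · have h1 := hyC i
      have h2 : |y i| < 1 := by
        have : (|(y i : ℝ)|) < 1 := by
          simp only [hx0, ivec, Pi.sub_apply, mulVec, dotProduct, Pi.zero_apply, Int.cast_zero,
            mul_zero, Finset.sum_const_zero, zero_sub, abs_neg] at h1
          linarith
        exact_mod_cast this
      exact Int.abs_lt_one_iff.1 h2
    · exact congrFun hx0 j
  · calc _ ≤ (T ^ m)⁻¹ := hPi
      _ = (T ^ n) ^ (-((m : ℝ) / n)) := by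
        rw [Real.rpow_neg (by positivity), ← Real.rpow_natCast T n, ← Real.rpow_mul hT0.le,
          mul_div_cancel₀ _ (by positivity), Real.rpow_natCast]
      _ ≤ _ := Real.rpow_le_rpow_of_nonpos (zero_lt_one.trans_le (one_le_Pigeo' _)) hPi'
        (neg_nonpos.2 (by positivity))

/-- The coordinates of an approximation can be majorized by positive numbers with
almost the same product. -/
theorem exists_pos_majorant {n : ℕ} (z : Fin n → ℝ) {b : ℝ} (hb : ∏ i, |z i| < b) :
    ∃ μ : Fin n → ℝ, (∀ i, 0 < μ i) ∧ (∀ i, |z i| ≤ μ i) ∧ ∏ i, μ i < b := by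
  have hcont : Continuous fun η : ℝ => ∏ i, (|z i| + η) := by fun_prop
  have h0 : ∀ᶠ η in nhds (0 : ℝ), ∏ i, (|z i| + η) < b :=
    hcont.continuousAt.eventually_lt_const (by simpa using hb)
  obtain ⟨η, hη, hpos⟩ := ((h0.filter_mono nhdsWithin_le_nhds).and
    (self_mem_nhdsWithin : Set.Ioi (0 : ℝ) ∈ nhdsWithin 0 (Set.Ioi 0))).exists
  have hpos' : 0 < η := hpos
  exact ⟨fun i => |z i| + η, fun i => by positivity, fun i => by linarith, hη⟩

/-- A lower bound on the height making all asymptotic inequalities of the transference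
argument valid. -/
theorem exists_forall_le_mul {α β : ℝ} (hα : 0 < α) (hβ : 0 < β) (a b c : ℝ) :
    ∃ q₀ : ℝ, ∀ q, q₀ ≤ q → a ≤ α * q ∧ b ≤ β * q ∧ c ≤ q := by
  refine ⟨max (a / α) (max (b / β) c), fun q hq => ?_⟩
  simp only [max_le_iff] at hq
  refine ⟨?_, ?_, hq.2.2⟩
  · rw [mul_comm]
    exact (div_le_iff₀ hα).1 hq.1
  · rw [mul_comm]
    exact (div_le_iff₀ hβ).1 hq.2.1

theorem MultApprox.transpose {n m : ℕ} (hn : 0 < n) (hm : 0 < m)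
    {Θ : Matrix (Fin n) (Fin m) ℝ} {γ f : ℝ} (hγ : (m : ℝ) / n < γ) (hf : 0 ≤ f)
    (hfγ : f * (m + (m - 1) * γ) < n * γ + n - 1) (h : MultApprox n m Θ γ) :
    MultApprox m n Θᵀ f := by
  have hn1 : (1 : ℝ) ≤ n := by exact_mod_cast hn
  have hm1 : (1 : ℝ) ≤ m := by exact_mod_cast hm
  have hγ0 : 0 < γ := lt_of_le_of_lt (by positivity) hγ
  have hγ' : (m : ℝ) < γ * n := (div_lt_iff₀ (by linarith)).1 hγ
  refine MultApprox.of_forall_lt _ _ fun ε hε => ?_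
  set E : ℝ := m + n - 1 with hE
  have hE0 : 0 < E := by linarith
  set δ : ℝ := (γ * n / m - 1) / E with hδ
  have hδ0 : 0 < δ := by
    apply div_pos _ hE0
    rw [sub_pos, lt_div_iff₀ (by linarith)]
    linarith
  set a : ℝ := 1 - (m - 1) * f / n with ha
  have ha0 : 0 < a := by
    rw [ha, sub_pos, div_lt_one (by linarith)]
    by_contra! hcon
    nlinarith
  have hab : 0 < a * δ + (1 / m - f / n) := by
    have : a * δ + (1 / m - f / n) = (n * γ + n - 1 - f * (m + (m - 1) * γ)) / (m * E) := by
      rw [ha, hδ]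
      field_simp
      rw [hE]
      ring
    rw [this]
    exact div_pos (by linarith) (by positivity)
  set D : ℝ := m + n with hD
  have hD0 : 0 < D := by linarith
  set c₀ : ℝ := (n + 2) * Real.log 2 / E with hc₀
  obtain ⟨q₀, hq₀⟩ := exists_forall_le_mul hδ0 hab (Real.log D + c₀ + Real.log 2)
    (Real.log D + a * c₀ + (n + 1) * f / n * Real.log 2) (-(m * Real.log ε))
  obtain ⟨x, y, hx, hxy, hQ⟩ := h.exists_large hγ0.le (Real.exp q₀)
  set Q := ∏ j, max 1 |ivec x j| with hQdef
  have hQ1 : 1 ≤ Q := one_le_prod_max _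
  have hQ0 : 0 < Q := by linarith
  set q := Real.log Q with hq
  have hQq : Q = Real.exp q := (Real.exp_log hQ0).symm
  obtain ⟨h1, h2, h3⟩ := hq₀ q ((Real.le_log_iff_exp_le hQ0).2 hQ)
  have hz : ∏ i, |(Θ *ᵥ ivec x - ivec y) i| < 2 * Real.exp (-(γ * n / m) * q) := by
    set P := ∏ i, |(Θ *ᵥ ivec x - ivec y) i|
    have hP : 0 ≤ P := Finset.prod_nonneg fun _ _ => abs_nonneg _
    have e1 : P = Pigeo (Θ *ᵥ ivec x - ivec y) ^ n := by
      rw [Pigeo, one_div, Real.rpow_inv_natCast_pow hP hn.ne']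
    have e2 : (Pigeo' (ivec x) ^ (-γ)) ^ n = Real.exp (-(γ * n / m) * q) := by
      rw [Pigeo', ← hQdef, hQq, ← Real.exp_mul, ← Real.exp_mul, ← Real.exp_nat_mul]
      congr 1
      ring
    have e3 : P ≤ Real.exp (-(γ * n / m) * q) := by
      rw [e1, ← e2]
      exact pow_le_pow_left₀ (Pigeo_nonneg _) hxy _
    have := Real.exp_pos (-(γ * n / m) * q)
    linarith
  obtain ⟨μ, hμ0, hzμ, hμ⟩ := exists_pos_majorant _ hz
  obtain ⟨r, hr, hrK⟩ := exists_scale (m := m) hn μ hμ0 (2 ^ (n + 1) * Q)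
    (one_lt_mul_of_lt_of_le (one_lt_pow₀ one_lt_two (by omega)) hQ1)
  obtain ⟨v, u, hvu, hw, hv⟩ := exists_dual_point Θ x hx y μ hμ0 hzμ r hr (by
    rw [← hQdef, ← hrK, ← Nat.sub_add_cancel hm, pow_succ]
    simp only [Nat.add_sub_cancel]
    ring)
  set ρ := Real.log r with hρ
  have hrρ : r = Real.exp ρ := (Real.exp_log hr).symm
  have hmu0 : 0 < ∏ i, μ i := Finset.prod_pos fun i _ => hμ0 i
  have hsub : ((m - 1 : ℕ) : ℝ) = m - 1 := by
    rw [Nat.cast_sub hm, Nat.cast_one]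
  have hlog2 : Real.exp (Real.log 2) = 2 := Real.exp_log two_pos
  have hρle : ρ ≤ c₀ - δ * q := by
    have e1 : r ^ (m - 1) * r ^ n ≤ 2 ^ (n + 1) * Q * ∏ i, μ i := by
      rw [← hrK, mul_assoc]
      gcongr
      rw [← div_le_iff₀ hmu0]
      calc r ^ n / ∏ i, μ i = ∏ i, r / μ i := by simp [Finset.prod_div_distrib]
        _ ≤ _ := Finset.prod_le_prod (fun i _ => div_nonneg hr.le (hμ0 i).le)
            (fun i _ => le_max_right _ _)
    have e2 : r ^ (m - 1) * r ^ n ≤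
        2 ^ (n + 1) * Q * (2 * Real.exp (-(γ * n / m) * q)) := e1.trans (by gcongr)
    rw [hrρ, hQq, ← hlog2, ← Real.exp_nat_mul, ← Real.exp_nat_mul, ← Real.exp_nat_mul,
      ← Real.exp_add, ← Real.exp_add, ← Real.exp_add, ← Real.exp_add, Real.exp_le_exp,
      hsub] at e2
    push_cast at e2
    have e3 : c₀ - δ * q = ((n + 2) * Real.log 2 - (γ * n / m - 1) * q) / E := by
      rw [hc₀, hδ]
      ring
    rw [e3, le_div_iff₀ hE0, hE]
    linarith
  have hDr : D * r = Real.exp (Real.log D + ρ) := by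
    rw [Real.exp_add, ← hrρ, Real.exp_log hD0]
  have hDr1 : D * r < 1 := by
    rw [hDr, Real.exp_lt_one_iff]
    have := Real.log_pos one_lt_two
    linarith
  have hW : Pigeo (Θᵀ *ᵥ ivec v - ivec u) ≤ Real.exp (Real.log D + ρ - q / m) := by
    refine Pigeo_le hm (Real.exp_pos _).le ?_
    calc _ ≤ ∏ j, D * r / max 1 |ivec x j| :=
          Finset.prod_le_prod (fun _ _ => abs_nonneg _) fun j _ => hw j
      _ = (D * r) ^ m / Q := by simp [Finset.prod_div_distrib, hQdef]
      _ = _ := by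
        rw [hDr, hQq, ← Real.exp_nat_mul, ← Real.exp_nat_mul, ← Real.exp_sub]
        congr 1
        field_simp
  have hV : Pigeo' (ivec v) ≤
      Real.exp (((n + 1) * Real.log 2 + q - (m - 1) * ρ) / n) := by
    refine Pigeo'_le hn (Real.exp_pos _).le ?_
    calc _ ≤ ∏ i, max 1 (r / μ i) :=
          Finset.prod_le_prod (fun _ _ => zero_le_one.trans (le_max_left _ _)) fun i _ => hv i
      _ = 2 ^ (n + 1) * Q / r ^ (m - 1) := by
        rw [← hrK, mul_div_cancel_left₀ _ (by positivity)]
      _ = _ := by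
        rw [hrρ, hQq, ← hlog2, ← Real.exp_nat_mul, ← Real.exp_nat_mul, ← Real.exp_nat_mul,
          ← Real.exp_add, ← Real.exp_sub, hsub, hlog2]
        congr 1
        field_simp
        push_cast
        ring
  refine ⟨v, u, ?_, ?_, ?_⟩
  · rintro rfl
    refine hvu.elim (fun h => h rfl) fun hu => hu ?_
    ext j
    have hj := hw j
    have hj' : |(u j : ℝ)| ≤ D * r / max 1 |ivec x j| := by
      simpa [ivec, mulVec, dotProduct] using hj
    have hj2 : |(u j : ℝ)| < 1 := by
      refine (hj'.trans (div_le_self (by positivity) (le_max_left _ _))).trans_lt hDr1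
    exact Int.abs_lt_one_iff.1 (by exact_mod_cast hj2)
  · refine hW.trans (le_trans ?_ (Real.rpow_le_rpow_of_nonpos
      (zero_lt_one.trans_le (one_le_Pigeo' _)) hV (neg_nonpos.2 hf)))
    rw [← Real.exp_mul, Real.exp_le_exp]
    have e1 : a * ρ ≤ a * (c₀ - δ * q) := by gcongr
    have e2 : ((n + 1) * Real.log 2 + q - (m - 1) * ρ) / n * -f =
        - ((n + 1) * f / n * Real.log 2) - f / n * q + (1 - a) * ρ := by
      rw [ha]
      ring
    rw [e2]
    have e3 : q / m = 1 / m * q := by ring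
    rw [e3]
    linarith
  · refine hW.trans_lt ?_
    rw [← Real.lt_log_iff_exp_lt hε]
    have e1 : Real.log D + ρ < 0 := by
      have := Real.log_pos one_lt_two
      linarith
    have e2 : -Real.log ε ≤ q / m := by
      rw [le_div_iff₀ (by linarith)]
      linarith
    linarith

theorem MultApprox.le_mbeta {n m : ℕ} {Θ : Matrix (Fin n) (Fin m) ℝ} {γ : ℝ}
    (h : MultApprox n m Θ γ) : (γ : EReal) ≤ mbeta n m Θ :=
  le_sSup ⟨γ, rfl, h⟩

theorem div_le_mbeta {n m : ℕ} (hn : 0 < n) (hm : 0 < m) (Θ : Matrix (Fin n) (Fin m) ℝ) :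
    (((m : ℝ) / n : ℝ) : EReal) ≤ mbeta n m Θ :=
  (MultApprox.dirichlet hn hm Θ).le_mbeta

theorem le_mbeta_transpose {n m : ℕ} (hn : 0 < n) (hm : 0 < m)
    {Θ : Matrix (Fin n) (Fin m) ℝ} {γ f : ℝ} (hγ : (m : ℝ) / n ≤ γ) (hf : 0 ≤ f)
    (hfγ : f * (m + (m - 1) * γ) < n * γ + n - 1) (h : (γ : EReal) < mbeta n m Θ) :
    (f : EReal) ≤ mbeta m n Θᵀ := by
  obtain ⟨_, ⟨γ', rfl, hγ'⟩, hlt⟩ := lt_sSup_iff.1 h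
  rw [EReal.coe_lt_coe_iff] at hlt
  have hn1 : (1 : ℝ) ≤ n := by exact_mod_cast hn
  have hm1 : (1 : ℝ) ≤ m := by exact_mod_cast hm
  have hγ0 : 0 ≤ γ := le_trans (by positivity) hγ
  have hslope : (m - 1) * f < n := by
    by_contra! hcon
    nlinarith
  refine (hγ'.transpose hn hm (hγ.trans_lt hlt) hf ?_).le_mbeta
  nlinarith

theorem le_mbeta_transpose_of_top {n m : ℕ} (hn : 0 < n) (hm : 0 < m)
    {Θ : Matrix (Fin n) (Fin m) ℝ} (htop : mbeta n m Θ = ⊤) {f : ℝ} (hf : 0 ≤ f)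
    (hfn : f * (m - 1) < n) : (f : EReal) ≤ mbeta m n Θᵀ := by
  have hn1 : (1 : ℝ) ≤ n := by exact_mod_cast hn
  have hpos : 0 < n - f * (m - 1) := by linarith
  refine le_mbeta_transpose hn hm (γ := max ((m : ℝ) / n) (f * m / (n - f * (m - 1))) + 1)
    ((le_max_left _ _).trans (lt_add_one _).le) hf ?_ (by rw [htop]; exact EReal.coe_lt_top _)
  have h1 := (div_le_iff₀ hpos).1 (le_max_right ((m : ℝ) / n) (f * m / (n - f * (m - 1))))
  linarith

theorem le_mbeta_transpose_of_forall {n m : ℕ} (hn : 0 < n) (hm : 0 < m)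
    (Θ : Matrix (Fin n) (Fin m) ℝ) {F : ℝ}
    (h : ∀ f : ℝ, 0 ≤ f → f < F → (f : EReal) ≤ mbeta m n Θᵀ) :
    (F : EReal) ≤ mbeta m n Θᵀ := by
  refine EReal.ge_of_forall_gt_iff_ge.1 fun f hf => ?_
  rcases le_or_gt 0 f with h0 | h0
  · exact h f h0 (EReal.coe_lt_coe_iff.1 hf)
  · refine le_trans ?_ (div_le_mbeta hm hn Θᵀ)
    rw [EReal.coe_le_coe_iff]
    exact h0.le.trans (by positivity)

/-- Corollary 2: β_×(ᵗΘ) ≥ (n β_×(Θ) + n − 1)/((m−1) β_×(Θ) + m), where for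
β_×(Θ) = +∞ the right-hand side is read as n/(m−1) if m ≥ 2, and as +∞ if m = 1. -/
theorem mbeta_transpose_dyson (n m : ℕ) (hn : 0 < n) (hm : 0 < m)
    (Θ : Matrix (Fin n) (Fin m) ℝ) :
    (mbeta n m Θ ≠ ⊤ →
      mbeta m n Θᵀ ≥ ((((n : ℝ) * (mbeta n m Θ).toReal + n - 1) /
        (((m : ℝ) - 1) * (mbeta n m Θ).toReal + m) : ℝ) : EReal)) ∧
    (mbeta n m Θ = ⊤ → m = 1 → mbeta m n Θᵀ = ⊤) ∧
    (mbeta n m Θ = ⊤ → 2 ≤ m → mbeta m n Θᵀ ≥ (((n : ℝ) / ((m : ℝ) - 1) : ℝ) : EReal)) := by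
  have hm0 : (0 : ℝ) < m := by exact_mod_cast hm
  have hn0 : (0 : ℝ) < n := by exact_mod_cast hn
  refine ⟨fun hfin => ?_, fun htop hm1 => ?_, fun htop hm2 => ?_⟩
  · have hge := div_le_mbeta hn hm Θ
    set B := (mbeta n m Θ).toReal with hBdef
    have hB : mbeta n m Θ = (B : EReal) :=
      (EReal.coe_toReal hfin (ne_bot_of_le_ne_bot (EReal.coe_ne_bot _) hge)).symm
    rw [hB, EReal.coe_le_coe_iff] at hge
    have hB0 : 0 < B := lt_of_lt_of_le (by positivity) hge
    have hm1 : (1 : ℝ) ≤ m := by exact_mod_cast hm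
    have hden : 0 < ((m : ℝ) - 1) * B + m := by nlinarith
    rcases hge.eq_or_lt with heq | hlt
    · have hval : ((n : ℝ) * B + n - 1) / (((m : ℝ) - 1) * B + m) = n / m := by
        rw [div_eq_div_iff hden.ne' hm0.ne', ← heq]
        field_simp
        ring
      rw [hval]
      exact div_le_mbeta hm hn Θᵀ
    · refine le_mbeta_transpose_of_forall hn hm Θ fun f hf hfB => ?_
      rw [lt_div_iff₀ hden] at hfB
      have hcont : Continuous fun γ : ℝ => n * γ + n - 1 - f * (m + (m - 1) * γ) := by fun_prop
      have hev : ∀ᶠ γ in nhds B, 0 < n * γ + n - 1 - f * (m + (m - 1) * γ) :=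
        hcont.continuousAt.eventually_const_lt (by linarith)
      obtain ⟨γ, ⟨hγ, hγm⟩, hγB⟩ := (((hev.and (lt_mem_nhds hlt)).filter_mono
        (nhdsWithin_le_nhds (s := Set.Iio B))).and self_mem_nhdsWithin).exists
      refine le_mbeta_transpose hn hm hγm.le hf (by linarith) ?_
      rw [hB]
      exact_mod_cast hγB
  · rw [EReal.eq_top_iff_forall_lt]
    intro f
    refine lt_of_lt_of_le (EReal.coe_lt_coe_iff.2 ((le_max_left f 0).trans_lt (lt_add_one _)))
      (le_mbeta_transpose_of_top hn hm htop (by positivity) ?_)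
    simpa [hm1] using hn
  · have hm2' : (2 : ℝ) ≤ m := by exact_mod_cast hm2
    refine le_mbeta_transpose_of_forall hn hm Θ fun f hf hfB => ?_
    exact le_mbeta_transpose_of_top hn hm htop hf ((lt_div_iff₀ (by linarith)).1 hfB)
end
end

section
/- Let m be a positive integer and Θ a real 1×m matrix (a row of m real numbers). Then β(ᵗΘ) ≥ (β_×(Θ) − m) / ((m−1)·β_×(Θ) + m), where if β_×(Θ) = +∞ the right-hand side is interpreted as 1/(m−1) when m ≥ 2 and as +∞ when m = 1. -/
open MeasureTheory Filter Matrix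

noncomputable section

/-- There are infinitely many pairs x ∈ ℤ^m, y ∈ ℤ^n with |Θx − y|_∞ ≤ |x|_∞^{−γ}. -/
def OrdApprox (n m : ℕ) (Θ : Matrix (Fin n) (Fin m) ℝ) (γ : ℝ) : Prop :=
  {p : (Fin m → ℤ) × (Fin n → ℤ) |
    ‖Θ.mulVec (ivec p.1) - ivec p.2‖ ≤ ‖ivec p.1‖ ^ (-γ)}.Infinite

/-- The ordinary Diophantine exponent β(Θ), as an extended real number. -/
def obeta (n m : ℕ) (Θ : Matrix (Fin n) (Fin m) ℝ) : EReal :=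
  sSup {x : EReal | ∃ γ : ℝ, x = (γ : EReal) ∧ OrdApprox n m Θ γ}

/-- Minkowski's theorem on linear forms, with strict inequalities. -/
theorem exists_int_abs_mulVec_lt {ι : Type*} [Fintype ι] [DecidableEq ι] (A : Matrix ι ι ℝ)
    (hA : A.det ≠ 0) (c : ι → ℝ) (hc : ∀ i, 0 < c i) (h : |A.det| < ∏ i, c i) :
    ∃ z : ι → ℤ, z ≠ 0 ∧ ∀ i, |(A *ᵥ fun j => (z j : ℝ)) i| < c i := by
  set f : (ι → ℝ) →ₗ[ℝ] (ι → ℝ) := Matrix.toLin' A with hf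
  have hdet : LinearMap.det f = A.det := LinearMap.det_toLin' A
  set box : Set (ι → ℝ) := Set.pi Set.univ fun i => Set.Ioo (-c i) (c i) with hbox
  have hconv : Convex ℝ (f ⁻¹' box) :=
    (convex_pi fun i _ => convex_Ioo (-c i) (c i)).linear_preimage f
  have hsymm : ∀ x ∈ f ⁻¹' box, -x ∈ f ⁻¹' box := by
    intro x hx
    simp only [Set.mem_preimage, hbox, Set.mem_univ_pi, map_neg, Pi.neg_apply, Set.mem_Ioo] at hx ⊢
    exact fun i => ⟨by linarith [(hx i).2], by linarith [(hx i).1]⟩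
  let b := Pi.basisFun ℝ ι
  have : Countable (Submodule.span ℤ (Set.range b)).toAddSubgroup :=
    inferInstanceAs (Countable (Submodule.span ℤ (Set.range b)))
  have hvol : volume (ZSpan.fundamentalDomain b) * 2 ^ Module.finrank ℝ (ι → ℝ)
      < volume (f ⁻¹' box) := by
    rw [Measure.addHaar_preimage_linearMap _ (by rwa [hdet]), hdet, hbox, Real.volume_pi_Ioo,
      ZSpan.fundamentalDomain_pi_basisFun, volume_pi, Measure.pi_pi,
      ← ENNReal.ofReal_prod_of_nonneg fun i _ => by linarith [hc i],
      ← ENNReal.ofReal_mul (abs_nonneg _)]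
    simp only [Real.volume_Ico, sub_zero, ENNReal.ofReal_one, Finset.prod_const_one, one_mul,
      Module.finrank_fintype_fun_eq_card]
    rw [show (2 : ENNReal) ^ Fintype.card ι = ENNReal.ofReal (2 ^ Fintype.card ι) by
      rw [ENNReal.ofReal_pow (by norm_num)]; simp]
    have hp : (0 : ℝ) < 2 ^ Fintype.card ι := by positivity
    refine (ENNReal.ofReal_lt_ofReal_iff_of_nonneg hp.le).2 ?_
    have : ∏ i, (c i - -c i) = 2 ^ Fintype.card ι * ∏ i, c i := by
      simp_rw [sub_neg_eq_add, ← two_mul]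
      rw [Finset.prod_mul_distrib]; simp
    rw [this, abs_inv, inv_mul_eq_div, lt_div_iff₀ (abs_pos.2 hA)]
    exact mul_lt_mul_of_pos_left h hp
  obtain ⟨x, hx0, hx⟩ := exists_ne_zero_mem_lattice_of_measure_mul_two_pow_lt_measure
    (ZSpan.isAddFundamentalDomain' b volume) hsymm hconv hvol
  have hxm : (x : ι → ℝ) ∈ Submodule.span ℤ (Set.range b) := x.2
  choose z hz using (b.mem_span_iff_repr_mem ℤ (x : ι → ℝ)).1 hxm
  have hxz : (x : ι → ℝ) = fun j => (z j : ℝ) := by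
    funext j
    have := hz j
    simp only [b, Pi.basisFun_repr, algebraMap_int_eq, eq_intCast] at this
    exact this.symm
  refine ⟨z, ?_, fun i => ?_⟩
  · rintro rfl
    exact hx0 (Subtype.ext (by rw [hxz]; ext; simp))
  · rw [hxz] at hx
    have := hx i (Set.mem_univ i)
    rw [hf, Matrix.toLin'_apply] at this
    exact abs_lt.2 this

theorem exists_int_near_of_dotProduct_eq {m : ℕ} (θ : Fin m → ℝ) (x : Fin m → ℤ) (y : ℤ)
    {δ L : ℝ} (hm : 0 < m) (hδ : 0 < δ) (h : θ ⬝ᵥ (fun i => (x i : ℝ)) - y = δ) (hL : 0 < L)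
    (hLm : L ^ m = δ * ∏ i, max 1 |(x i : ℝ)|) :
    ∃ (q : ℤ) (p : Fin m → ℤ), (q ≠ 0 ∨ p ≠ 0) ∧ |(q : ℝ)| * δ ≤ 2 * m * L ∧
      ∀ i, |q * θ i - p i| * max 1 |(x i : ℝ)| ≤ 2 * L := by
  have hX : ∀ i, 0 < max 1 |(x i : ℝ)| := fun i => by positivity
  let A : Matrix (Fin m ⊕ Unit) (Fin m ⊕ Unit) ℝ :=
    fromBlocks 1 (replicateCol Unit (-θ)) (replicateRow Unit fun i => (x i : ℝ))
      (of fun _ _ => -(y : ℝ))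
  have hdet : A.det = δ := by
    rw [det_fromBlocks_one₁₁, det_unique, ← h]
    simp [dotProduct, Matrix.mul_apply, mul_comm]
    ring
  obtain ⟨z, hz0, hz⟩ := exists_int_abs_mulVec_lt A (by rw [hdet]; exact hδ.ne')
    (Sum.elim (fun i => 2 * L / max 1 |(x i : ℝ)|) fun _ => 1)
    (by rintro (i | i) <;> simp only [Sum.elim_inl, Sum.elim_inr] <;> positivity) (by
      rw [hdet, abs_of_pos hδ, Fintype.prod_sum_type]
      simp only [Sum.elim_inl, Sum.elim_inr, Finset.prod_const_one, mul_one,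
        Finset.prod_div_distrib, Finset.prod_const, Finset.card_univ, Fintype.card_fin]
      have hP : 0 < ∏ i, max 1 |(x i : ℝ)| := Finset.prod_pos fun i _ => hX i
      rw [mul_pow, hLm, lt_div_iff₀ hP]
      have : (1 : ℝ) < 2 ^ m := one_lt_pow₀ (by norm_num) hm.ne'
      nlinarith [mul_pos hδ hP])
  set q := z (Sum.inr ()) with hq
  set p : Fin m → ℤ := fun i => z (Sum.inl i) with hp
  have hξ : ∀ i, |q * θ i - p i| * max 1 |(x i : ℝ)| < 2 * L := by
    intro i
    have := hz (Sum.inl i)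
    rw [Sum.elim_inl, lt_div_iff₀ (hX i)] at this
    have hA : (A *ᵥ fun j => (z j : ℝ)) (Sum.inl i) = p i - q * θ i := by
      simp [A, mulVec, dotProduct, one_apply, hq, hp]
      ring
    rwa [hA, abs_sub_comm] at this
  have hlast : (∑ i, x i * p i) - y * q = 0 := by
    have := hz (Sum.inr ())
    rw [Sum.elim_inr] at this
    rw [← Int.abs_lt_one_iff]
    have h2 : |(((∑ i, x i * p i) - y * q : ℤ) : ℝ)| < 1 := by
      convert this using 2
      simp [A, mulVec, dotProduct, hq, hp]
      ring
    exact_mod_cast h2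
  have hqδ : q * δ = ∑ i, (q * θ i - p i) * x i := by
    have h2 : (∑ i, (x i : ℝ) * p i) - y * q = 0 := by exact_mod_cast hlast
    rw [← h, dotProduct]
    simp_rw [sub_mul, Finset.sum_sub_distrib, mul_assoc]
    rw [← Finset.mul_sum]
    simp_rw [mul_comm (p _ : ℝ)]
    linarith
  refine ⟨q, p, ?_, ?_, fun i => (hξ i).le⟩
  · by_contra! hcon
    apply hz0
    ext (i | i)
    · exact congrFun hcon.2 i
    · exact hcon.1
  · calc |(q : ℝ)| * δ = |∑ i, (q * θ i - p i) * x i| := by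
          rw [← hqδ, abs_mul, abs_of_pos hδ]
      _ ≤ ∑ i, |(q * θ i - p i) * x i| := Finset.abs_sum_le_sum_abs _ _
      _ ≤ ∑ i : Fin m, 2 * L := by
          refine Finset.sum_le_sum fun i _ => ?_
          rw [abs_mul]
          exact (mul_le_mul_of_nonneg_left (le_max_right _ _) (abs_nonneg _)).trans (hξ i).le
      _ = 2 * m * L := by simp; ring

/-- Transference: a small value of a linear form at an integer point yields a simultaneous
approximation of its coefficients. -/
theorem exists_int_near_of_abs_dotProduct_le {m : ℕ} (θ : Fin m → ℝ) (x : Fin m → ℤ) (y : ℤ)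
    {δ L : ℝ} (hx : x ≠ 0) (hδ : 0 < δ) (h : |θ ⬝ᵥ (fun i => (x i : ℝ)) - y| ≤ δ) (hL : 0 < L)
    (hLm : L ^ m = δ * ∏ i, max 1 |(x i : ℝ)|) :
    ∃ (q : ℤ) (p : Fin m → ℤ), (q ≠ 0 ∨ p ≠ 0) ∧ |(q : ℝ)| * δ ≤ 2 * m * L ∧
      ∀ i, |q * θ i - p i| ≤ (4 * m + 2) * L := by
  obtain ⟨j, hj⟩ := Function.ne_iff.1 hx
  have hxj : (x j : ℝ) ≠ 0 := by exact_mod_cast hj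
  have hxj1 : 1 ≤ |(x j : ℝ)| := by exact_mod_cast Int.one_le_abs hj
  set e := θ ⬝ᵥ (fun i => (x i : ℝ)) - y
  obtain ⟨q, p, hne, hq, hp⟩ := exists_int_near_of_dotProduct_eq
    (θ + Pi.single j ((δ - e) / x j)) x y j.pos hδ (by
      rw [add_dotProduct, single_dotProduct, div_mul_cancel₀ _ hxj]; linarith) hL hLm
  refine ⟨q, p, hne, hq, fun i => ?_⟩
  have hi : |q * (θ i + (Pi.single j ((δ - e) / x j) : Fin m → ℝ) i) - p i| ≤ 2 * L :=
    (le_mul_of_one_le_right (abs_nonneg _) (le_max_left 1 |(x i : ℝ)|)).trans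
      (by simpa using hp i)
  have hs : |q * (Pi.single j ((δ - e) / x j) : Fin m → ℝ) i| ≤ 4 * m * L := by
    rcases eq_or_ne i j with rfl | hij
    · rw [Pi.single_eq_same, abs_mul, abs_div]
      have h1 : |δ - e| / |(x i : ℝ)| ≤ 2 * δ :=
        (div_le_self (abs_nonneg _) hxj1).trans
          (by rw [abs_le] at h ⊢; constructor <;> linarith)
      calc _ ≤ |(q : ℝ)| * (2 * δ) := by gcongr
        _ ≤ _ := by linarith
    · rw [Pi.single_eq_of_ne hij]; simp; positivity
  rw [abs_le] at hi hs ⊢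
  constructor <;> linarith

theorem Pigeo'_pow {k : ℕ} (hk : k ≠ 0) (z : Fin k → ℝ) : Pigeo' z ^ k = ∏ i, max 1 |z i| := by
  rw [Pigeo', one_div, Real.rpow_inv_natCast_pow (Finset.prod_nonneg fun _ _ => by positivity) hk]

theorem abs_le_Pigeo'_pow {k : ℕ} (z : Fin k → ℝ) (i : Fin k) : |z i| ≤ Pigeo' z ^ k := by
  rw [Pigeo'_pow i.pos.ne']
  simpa only [max_comm] using Finset.le_prod_max_one (Finset.mem_univ i) fun i => |z i|

theorem Pigeo_fin_one (z : Fin 1 → ℝ) : Pigeo z = |z 0| := by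
  simp [Pigeo]

theorem mulVec_ivec_fin_one_apply {m : ℕ} (Θ : Matrix (Fin 1) (Fin m) ℝ) (x : Fin m → ℤ)
    (y : Fin 1 → ℤ) : (Θ.mulVec (ivec x) - ivec y) 0 = Θ 0 ⬝ᵥ (fun i => (x i : ℝ)) - y 0 := rfl

/-- Approximations witnessing a positive multiplicative exponent have unbounded height. -/
theorem MultApprox.exists_le_Pigeo' {m : ℕ} {Θ : Matrix (Fin 1) (Fin m) ℝ} {γ : ℝ}
    (h : MultApprox 1 m Θ γ) (hγ : 0 ≤ γ) (R : ℝ) :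
    ∃ (x : Fin m → ℤ) (y : ℤ), x ≠ 0 ∧ R ≤ Pigeo' (ivec x) ∧
      |Θ 0 ⬝ᵥ (fun i => (x i : ℝ)) - y| ≤ Pigeo' (ivec x) ^ (-γ) := by
  by_contra! hcon
  obtain ⟨N, hN⟩ := exists_nat_ge (R ^ m)
  obtain ⟨M, hM⟩ := exists_nat_ge (∑ i, |Θ 0 i| * N + 1)
  refine h (((Set.finite_Icc (fun _ : Fin m => (-N : ℤ)) fun _ => N).prod
    (Set.finite_Icc (fun _ : Fin 1 => (-M : ℤ)) fun _ => M)).subset ?_)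
  rintro ⟨x, y⟩ ⟨hx, hxy⟩
  rw [Pigeo_fin_one, mulVec_ivec_fin_one_apply] at hxy
  have hR : Pigeo' (ivec x) < R := by
    by_contra! hR
    exact (hcon x (y 0) hx hR).not_ge hxy
  have h1 := one_le_Pigeo' (ivec x)
  have hxN : ∀ i, |(x i : ℝ)| ≤ N := fun i =>
    (abs_le_Pigeo'_pow (ivec x) i).trans ((pow_le_pow_left₀ (by linarith) hR.le m).trans hN)
  have hy : |(y 0 : ℝ)| ≤ M := by
    have h2 : |Θ 0 ⬝ᵥ (fun i => (x i : ℝ))| ≤ ∑ i, |Θ 0 i| * N :=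
      (Finset.abs_sum_le_sum_abs _ _).trans <| Finset.sum_le_sum fun i _ => by
        rw [abs_mul]
        exact mul_le_mul_of_nonneg_left (hxN i) (abs_nonneg _)
    have h3 := hxy.trans (Real.rpow_le_one_of_one_le_of_nonpos h1 (by linarith))
    rw [abs_le] at h2 h3 ⊢
    constructor <;> linarith
  have hxN' : ∀ i, |x i| ≤ N := fun i => by exact_mod_cast hxN i
  have hy' : |y 0| ≤ M := by exact_mod_cast hy
  refine ⟨⟨fun i => (abs_le.1 (hxN' i)).1, fun i => (abs_le.1 (hxN' i)).2⟩,
    fun i => ?_, fun i => ?_⟩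
  · rw [Subsingleton.elim i 0]; exact (abs_le.1 hy').1
  · rw [Subsingleton.elim i 0]; exact (abs_le.1 hy').2

theorem MultApprox.anti {n m : ℕ} {Θ : Matrix (Fin n) (Fin m) ℝ} {γ γ' : ℝ}
    (h : MultApprox n m Θ γ') (hγ : γ ≤ γ') : MultApprox n m Θ γ :=
  Set.Infinite.mono (fun p hp => ⟨hp.1, hp.2.trans
    (Real.rpow_le_rpow_of_exponent_le (one_le_Pigeo' _) (by linarith))⟩) h

theorem MultApprox.of_lt_mbeta {n m : ℕ} {Θ : Matrix (Fin n) (Fin m) ℝ} {γ : ℝ}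
    (h : (γ : EReal) < mbeta n m Θ) : MultApprox n m Θ γ := by
  obtain ⟨_, ⟨γ', rfl, hγ'⟩, hlt⟩ := lt_sSup_iff.1 h
  exact hγ'.anti (by exact_mod_cast hlt.le)

theorem OrdApprox.le_obeta {n m : ℕ} {Θ : Matrix (Fin n) (Fin m) ℝ} {γ : ℝ}
    (h : OrdApprox n m Θ γ) : (γ : EReal) ≤ obeta n m Θ :=
  le_sSup ⟨γ, rfl, h⟩

/-- Arbitrarily good approximations of exponent `γ` at nonzero points are infinitely many, since
the multiples of an exact solution are again exact. -/
theorem ordApprox_of_forall_exists {n m : ℕ} {Θ : Matrix (Fin n) (Fin m) ℝ} {γ : ℝ}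
    (H : ∀ ε > 0, ∃ (x : Fin m → ℤ) (y : Fin n → ℤ), x ≠ 0 ∧
      ‖Θ.mulVec (ivec x) - ivec y‖ ≤ ε ∧
      ‖Θ.mulVec (ivec x) - ivec y‖ ≤ ‖ivec x‖ ^ (-γ)) : OrdApprox n m Θ γ := by
  intro hfin
  by_cases h0 : ∃ (x : Fin m → ℤ) (y : Fin n → ℤ), x ≠ 0 ∧ Θ.mulVec (ivec x) - ivec y = 0
  · obtain ⟨x, y, hx, hxy⟩ := h0
    refine Set.infinite_of_injective_forall_mem (f := fun k : ℤ => (k • x, k • y)) ?_ ?_ hfin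
    · intro k l hkl
      exact smul_left_injective ℤ hx (Prod.ext_iff.1 hkl).1
    · intro k
      have hz : ∀ {d : ℕ} (v : Fin d → ℤ), ivec (k • v) = (k : ℝ) • ivec v := by
        intro d v
        ext i
        simp [ivec]
      simp only [Set.mem_ofPred_eq, hz, mulVec_smul, ← smul_sub, hxy, smul_zero, norm_zero]
      positivity
  · push Not at h0
    let S := {p ∈ hfin.toFinset | p.1 ≠ 0}
    have hpos : ∀ p ∈ S, 0 < ‖Θ.mulVec (ivec p.1) - ivec p.2‖ := fun p hp =>
      norm_pos_iff.2 (h0 _ _ (Finset.mem_filter.1 hp).2)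
    obtain ⟨ε, hε, hlt⟩ : ∃ ε > 0, ∀ p ∈ S, ε < ‖Θ.mulVec (ivec p.1) - ivec p.2‖ := by
      rcases S.eq_empty_or_nonempty with hS | hS
      · exact ⟨1, one_pos, by simp [hS]⟩
      · obtain ⟨p, hp, hmin⟩ := S.exists_min_image (fun p => ‖Θ.mulVec (ivec p.1) - ivec p.2‖) hS
        exact ⟨_, half_pos (hpos p hp), fun q hq => (half_lt_self (hpos p hp)).trans_le (hmin q hq)⟩
    obtain ⟨x, y, hx, h1, h2⟩ := H ε hε
    exact (hlt (x, y) (Finset.mem_filter.2 ⟨hfin.mem_toFinset.2 h2, hx⟩)).not_ge h1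

theorem ordApprox_zero (n m : ℕ) (hm : 0 < m) (Θ : Matrix (Fin n) (Fin m) ℝ) :
    OrdApprox n m Θ 0 := by
  refine Set.infinite_of_injective_forall_mem
    (f := fun k : ℤ => ((fun _ => k : Fin m → ℤ), fun i => round (Θ.mulVec (ivec fun _ => k) i)))
    (fun k l hkl => congrFun (Prod.ext_iff.1 hkl).1 ⟨0, hm⟩) fun k => ?_
  simp only [Set.mem_ofPred_eq, neg_zero, Real.rpow_zero]
  refine (pi_norm_le_iff_of_nonneg one_pos.le).2 fun i => ?_
  exact (abs_sub_round _).trans (by norm_num)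

theorem obeta_nonneg (n m : ℕ) (hm : 0 < m) (Θ : Matrix (Fin n) (Fin m) ℝ) : 0 ≤ obeta n m Θ :=
  (ordApprox_zero n m hm Θ).le_obeta

theorem multApprox_zero (m : ℕ) (hm : 0 < m) (Θ : Matrix (Fin 1) (Fin m) ℝ) :
    MultApprox 1 m Θ 0 := by
  refine Set.infinite_of_injective_forall_mem (f := fun k : ℕ =>
      ((fun _ => k + 1 : Fin m → ℤ), fun i => round (Θ.mulVec (ivec fun _ => k + 1) i)))
    (fun k l hkl => ?_) fun k => ⟨fun h => ?_, ?_⟩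
  · have := congrFun (Prod.ext_iff.1 hkl).1 ⟨0, hm⟩
    simpa using this
  · have := congrFun h ⟨0, hm⟩
    simp only [Pi.zero_apply] at this
    omega
  · rw [neg_zero, Real.rpow_zero, Pigeo_fin_one]
    exact (abs_sub_round _).trans (by norm_num)

theorem MultApprox.ordApprox_transpose {m : ℕ} (hm : 0 < m) {Θ : Matrix (Fin 1) (Fin m) ℝ}
    {γ g : ℝ} (h : MultApprox 1 m Θ γ) (hg : 0 ≤ g) (hγ : 0 ≤ γ)
    (hgγ : g * ((m - 1) * γ + m) < γ - m) : OrdApprox m 1 Θᵀ g := by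
  have hm1 : (1 : ℝ) ≤ m := by exact_mod_cast hm
  have hm0 : (0 : ℝ) < m := by linarith
  have hγm : (m : ℝ) < γ := by
    have : 0 ≤ g * ((m - 1) * γ + m) :=
      mul_nonneg hg (add_nonneg (mul_nonneg (by linarith) hγ) hm0.le)
    linarith
  set a : ℝ := 1 - γ / m with ha
  have ha0 : a < 0 := by rw [ha, sub_neg, one_lt_div hm0]; exact hγm
  set C : ℝ := 4 * m + 2 with hC
  have hC0 : 0 < C := by positivity
  have hexp : a + g * (a + γ) < 0 := by
    have : (a + g * (a + γ)) * m = g * ((m - 1) * γ + m) - (γ - m) := by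
      rw [ha]; field_simp; ring
    by_contra! hcon
    nlinarith [mul_nonneg hcon hm0.le]
  have hlim : ∀ {e K : ℝ}, e < 0 → Tendsto (fun P : ℝ => K * P ^ e) atTop (nhds 0) := by
    intro e K he
    have := (tendsto_rpow_neg_atTop (neg_pos.2 he)).const_mul K
    simpa using this
  refine ordApprox_of_forall_exists fun ε hε => ?_
  obtain ⟨R, hR⟩ := eventually_atTop.1 <|
    ((hlim (K := C) ha0).eventually (gt_mem_nhds (lt_min hε one_pos))).and
      ((hlim (K := C * C ^ g) hexp).eventually (gt_mem_nhds one_pos))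
  obtain ⟨x, y, hx, hRP, hxy⟩ := h.exists_le_Pigeo' hγ R
  obtain ⟨hsmall, hprod⟩ := hR _ hRP
  have hP1 := one_le_Pigeo' (ivec x)
  have hPm := Pigeo'_pow hm.ne' (ivec x)
  set P := Pigeo' (ivec x)
  have hP : 0 < P := by linarith
  have hL : (P ^ a) ^ m = P ^ (-γ) * ∏ i, max 1 |(x i : ℝ)| := by
    change _ = P ^ (-γ) * ∏ i, max 1 |ivec x i|
    rw [← hPm, ← Real.rpow_natCast P m, ← Real.rpow_natCast (P ^ a) m, ← Real.rpow_mul hP.le,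
      ← Real.rpow_add hP]
    congr 1
    rw [ha]; field_simp; ring
  obtain ⟨q, p, hne, hq, hp⟩ := exists_int_near_of_abs_dotProduct_le (Θ 0) x y hx
    (Real.rpow_pos_of_pos hP _) hxy (Real.rpow_pos_of_pos hP a) hL
  have hq0 : q ≠ 0 := by
    rintro rfl
    refine hne.elim (fun h => h rfl) fun h => h (funext fun i => ?_)
    have := (hp i).trans_lt (hsmall.trans_le (min_le_right _ _))
    rw [Int.cast_zero, zero_mul, zero_sub, abs_neg] at this
    exact Int.abs_lt_one_iff.1 (by exact_mod_cast this)
  have hnorm : ‖Θᵀ.mulVec (ivec fun _ : Fin 1 => q) - ivec p‖ ≤ C * P ^ a := by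
    refine (pi_norm_le_iff_of_nonneg (by positivity)).2 fun i => ?_
    convert hp i using 1
    simp [mulVec, dotProduct, ivec, mul_comm]
  have hqnorm : ‖ivec fun _ : Fin 1 => q‖ = |(q : ℝ)| := by
    simp [ivec, Pi.norm_def]
  have hqpos : 0 < |(q : ℝ)| := by positivity
  have hqle : |(q : ℝ)| ≤ C * P ^ (a + γ) := by
    rw [Real.rpow_neg hP.le, ← div_eq_mul_inv, div_le_iff₀ (by positivity)] at hq
    rw [Real.rpow_add hP, ← mul_assoc]
    refine hq.trans ?_
    gcongr
    rw [hC]; linarith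
  refine ⟨fun _ => q, p, fun h => hq0 (congrFun h 0),
    hnorm.trans (hsmall.le.trans (min_le_left _ _)), hnorm.trans ?_⟩
  rw [hqnorm]
  refine le_trans ?_ (Real.rpow_le_rpow_of_nonpos hqpos hqle (neg_nonpos.2 hg))
  rw [Real.rpow_neg (by positivity), ← one_div, le_div_iff₀ (by positivity),
    Real.mul_rpow hC0.le (by positivity), ← Real.rpow_mul hP.le]
  refine le_of_eq_of_le ?_ hprod.le
  rw [Real.rpow_add hP, mul_comm g]
  ring

theorem coe_le_obeta_transpose {m : ℕ} (hm : 0 < m) {Θ : Matrix (Fin 1) (Fin m) ℝ} {r : ℝ}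
    (H : ∀ g, 0 ≤ g → g < r → ∃ γ : ℝ, 0 ≤ γ ∧ (γ : EReal) < mbeta 1 m Θ ∧
      g * ((m - 1) * γ + m) < γ - m) : (r : EReal) ≤ obeta m 1 Θᵀ := by
  refine EReal.ge_of_forall_gt_iff_ge.1 fun g hg => ?_
  have hg : g < r := by exact_mod_cast hg
  rcases lt_or_ge g 0 with hg0 | hg0
  · exact le_trans (by exact_mod_cast hg0.le) (obeta_nonneg m 1 one_pos Θᵀ)
  · obtain ⟨γ, hγ, hlt, h⟩ := H g hg0 hg
    exact ((MultApprox.of_lt_mbeta hlt).ordApprox_transpose hm hg0 hγ h).le_obeta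

/-- Corollary 3: for n = 1, β(ᵗΘ) ≥ (β_×(Θ) − m)/((m−1) β_×(Θ) + m), where for
β_×(Θ) = +∞ the right-hand side is read as 1/(m−1) if m ≥ 2, and as +∞ if m = 1. -/
theorem obeta_transpose_ge_of_mbeta (m : ℕ) (hm : 0 < m)
    (Θ : Matrix (Fin 1) (Fin m) ℝ) :
    (mbeta 1 m Θ ≠ ⊤ →
      obeta m 1 Θᵀ ≥ ((((mbeta 1 m Θ).toReal - m) /
        (((m : ℝ) - 1) * (mbeta 1 m Θ).toReal + m) : ℝ) : EReal)) ∧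
    (mbeta 1 m Θ = ⊤ → m = 1 → obeta m 1 Θᵀ = ⊤) ∧
    (mbeta 1 m Θ = ⊤ → 2 ≤ m → obeta m 1 Θᵀ ≥ (((1 : ℝ) / ((m : ℝ) - 1) : ℝ) : EReal)) := by
  have hm1 : (1 : ℝ) ≤ m := by exact_mod_cast hm
  refine ⟨fun htop => ?_, fun htop h1 => ?_, fun htop h2 => ?_⟩
  · have h0 : 0 ≤ mbeta 1 m Θ := le_sSup ⟨0, rfl, multApprox_zero m hm Θ⟩
    have hB := EReal.coe_toReal htop (EReal.bot_lt_zero.trans_le h0).ne'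
    set B := (mbeta 1 m Θ).toReal
    have hB0 : 0 ≤ B := EReal.toReal_nonneg h0
    have hden : 0 < ((m : ℝ) - 1) * B + m :=
      add_pos_of_nonneg_of_pos (mul_nonneg (by linarith) hB0) (by linarith)
    refine coe_le_obeta_transpose hm fun g hg hlt => ?_
    rw [lt_div_iff₀ hden] at hlt
    have hBpos : 0 < B := by linarith [mul_nonneg hg hden.le]
    have hcont : ContinuousAt (fun γ : ℝ => γ - m - g * ((m - 1) * γ + m)) B := by fun_prop
    have hev := (hcont.eventually (lt_mem_nhds (sub_pos.2 hlt))).and (lt_mem_nhds hBpos)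
    obtain ⟨γ, ⟨hγ, hγ0⟩, hγB⟩ :=
      ((hev.filter_mono nhdsWithin_le_nhds).and (self_mem_nhdsWithin (s := Set.Iio B))).exists
    exact ⟨γ, hγ0.le, by rw [← hB]; exact_mod_cast hγB, sub_pos.1 hγ⟩
  · subst h1
    refine EReal.eq_top_iff_forall_lt _ |>.2 fun r => ?_
    refine lt_of_lt_of_le (EReal.coe_lt_coe_iff.2 (lt_add_one r)) <|
      coe_le_obeta_transpose one_pos fun g hg _ => ⟨g + 2, by linarith,
        by rw [htop]; exact EReal.coe_lt_top _, ?_⟩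
    push_cast
    linarith
  · have h2' : (2 : ℝ) ≤ m := by exact_mod_cast h2
    refine coe_le_obeta_transpose hm fun g hg hlt => ?_
    rw [lt_div_iff₀ (by linarith)] at hlt
    have hk : 0 < 1 - g * (m - 1) := by linarith
    refine ⟨(m + g * m + 1) / (1 - g * (m - 1)), by positivity,
      by rw [htop]; exact EReal.coe_lt_top _, ?_⟩
    have := div_mul_cancel₀ (m + g * m + 1) hk.ne'
    linarith
end
end
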